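/- Let M and T be two popular matchings of G, each of maximum size among all popular matchings of G. Then |M(u)| = |T(u)| for every vertex u ∈ A∪B; i.e., every vertex is matched to the same number of partners in every maximum-size popular matching, and in particular all maximum-size popular matchings match the same set of vertices. -/

import Mathlib

/-!
Many-to-many matchings with two-sided preferences, votes, and popularity,
following "Popular Matchings in the Many-to-Many Setting".
-/

/-- The vote of a vertex with rank function `r` (smaller rank = more preferred)
comparing two options, where `none` stands for `null` (ranked below everything). -/
def vote {β : Type*} [DecidableEq β] (r : β → ℕ) : Option β → Option β → ℤ
  | none, none => 0
  | some _, none => 1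
  | none, some _ => -1
  | some x, some y => if x = y then 0 else if r x < r y then 1 else -1

/-- The common length `k` of the arrays compared in `δ_u(S₀,S₁)`:
after padding the smaller of `S₀, S₁` with nulls and removing common elements. -/
def kOf {β : Type*} [DecidableEq β] (S₀ S₁ : Finset β) : ℕ :=
  max S₀.card S₁.card - (S₀ ∩ S₁).card

/-- `S₀ ∖ S₁`, viewed as an array of `Option`s padded with `none` (null) to length `k`. -/
noncomputable def padded {β : Type*} [DecidableEq β] (S₀ S₁ : Finset β) (k : ℕ) : List (Option β) :=
  ((S₀ \ S₁).toList.map some) ++ List.replicate (k - (S₀ \ S₁).card) none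

/-- `δ_u(S₀,S₁)`: the minimum, over all permutations `σ` of `{1,…,k}`, of
`Σ_i vote_u(S'₀[i], S'₁[σ(i)])`. -/
noncomputable def deltaSet {β : Type*} [DecidableEq β] (r : β → ℕ) (S₀ S₁ : Finset β) : ℤ :=
  Finset.univ.inf' ⟨1, Finset.mem_univ 1⟩ fun σ : Equiv.Perm (Fin (kOf S₀ S₁)) =>
    ∑ i : Fin (kOf S₀ S₁),
      vote r ((padded S₀ S₁ (kOf S₀ S₁)).getD (i : ℕ) none)
             ((padded S₁ S₀ (kOf S₀ S₁)).getD (σ i : ℕ) none)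

/-- A bipartite instance `G = (A ∪ B, E)` with capacities `≥ 1` and strict
preferences of every vertex over its neighbors (given by injective-on-neighbors
rank functions; smaller rank = more preferred). -/
structure PrefInstance (α β : Type*) [Fintype α] [Fintype β] [DecidableEq α] [DecidableEq β] where
  E : Finset (α × β)
  capA : α → ℕ
  capB : β → ℕ
  rankA : α → β → ℕ
  rankB : β → α → ℕ
  capA_pos : ∀ a, 1 ≤ capA a
  capB_pos : ∀ b, 1 ≤ capB b
  rankA_injOn : ∀ a, Set.InjOn (rankA a) {b | (a, b) ∈ E}
  rankB_injOn : ∀ b, Set.InjOn (rankB b) {a | (a, b) ∈ E}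

namespace PrefInstance

variable {α β : Type*} [Fintype α] [Fintype β] [DecidableEq α] [DecidableEq β]

/-- `M(a)`: the set of `B`-vertices matched to `a` in `M`. -/
def rowSet (M : Finset (α × β)) (a : α) : Finset β :=
  Finset.univ.filter fun b => (a, b) ∈ M

/-- `M(b)`: the set of `A`-vertices matched to `b` in `M`. -/
def colSet (M : Finset (α × β)) (b : β) : Finset α :=
  Finset.univ.filter fun a => (a, b) ∈ M

variable (I : PrefInstance α β)

/-- `M` is a matching in `G`: a subset of `E` respecting all capacities. -/
def IsMatching (M : Finset (α × β)) : Prop :=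
  M ⊆ I.E ∧ (∀ a, (rowSet M a).card ≤ I.capA a) ∧ (∀ b, (colSet M b).card ≤ I.capB b)

/-- `Δ_a(M₀,M₁) = δ_a(M₀(a), M₁(a))` for `a ∈ A`. -/
noncomputable def DeltaA (M₀ M₁ : Finset (α × β)) (a : α) : ℤ :=
  deltaSet (I.rankA a) (rowSet M₀ a) (rowSet M₁ a)

/-- `Δ_b(M₀,M₁) = δ_b(M₀(b), M₁(b))` for `b ∈ B`. -/
noncomputable def DeltaB (M₀ M₁ : Finset (α × β)) (b : β) : ℤ :=
  deltaSet (I.rankB b) (colSet M₀ b) (colSet M₁ b)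

/-- `Δ(M₀,M₁) = Σ_{u ∈ A∪B} Δ_u(M₀,M₁)`. -/
noncomputable def Delta (M₀ M₁ : Finset (α × β)) : ℤ :=
  (∑ a, I.DeltaA M₀ M₁ a) + ∑ b, I.DeltaB M₀ M₁ b

/-- `M` is a popular matching: `Δ(M,T) ≥ 0` against every matching `T`. -/
def Popular (M : Finset (α × β)) : Prop :=
  I.IsMatching M ∧ ∀ T, I.IsMatching T → 0 ≤ I.Delta M T

/-- `M` is a weakly popular matching: `Δ(T,M) ≤ 0` for every matching `T`. -/
def WeaklyPopular (M : Finset (α × β)) : Prop :=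
  I.IsMatching M ∧ ∀ T, I.IsMatching T → I.Delta T M ≤ 0

/-- The edge `(a,b) ∈ E ∖ M` blocks `M`. -/
def Blocks (M : Finset (α × β)) (a : α) (b : β) : Prop :=
  (a, b) ∈ I.E ∧ (a, b) ∉ M ∧
  ((rowSet M a).card < I.capA a ∨ ∃ b' ∈ rowSet M a, I.rankA a b < I.rankA a b') ∧
  ((colSet M b).card < I.capB b ∨ ∃ a' ∈ colSet M b, I.rankB b a < I.rankB b a')

/-- `M` is a pairwise-stable matching: no edge blocks it. -/
def Stable (M : Finset (α × β)) : Prop :=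
  I.IsMatching M ∧ ∀ a b, ¬ I.Blocks M a b

end PrefInstance

/-!
There is a popular matching `N` with `|T(u)| ≤ |N(u)|` for every weakly popular `T` and every
vertex `u`. If `T` has at least as many edges as every popular matching then `|N| ≤ |T|`, so all
these inequalities are equalities, and the numbers `|T(u)|` do not depend on `T`.

The matching `N` is stable in a two-level instance: every edge is doubled into a copy of level
`false` and a copy of level `true`; vertices of `A` prefer any level `false` copy to any level
`true` copy, vertices of `B` the other way round, and within a level the original ranks decide.
Both sides choose greedily, taking at most one copy per partner. The rejections of such a choice are
monotone in the offers, so the Knaster–Tarski theorem gives a stable set of copies.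

The levels serve as a dual certificate. An edge of `N` at level `false` has price `1` at its
`A`-end and `-1` at its `B`-end, and the opposite at level `true`, so prices cancel along `N`. An
edge outside `N` has at each end, for each of its two copies, the cost `-1` if this end is filled
with better copies and `1` otherwise; since no copy blocks, its costs add up to at most `0`. Prices
and costs bound the individual votes, and weak duality for the assignment problem defining `δ_u`
gives `Δ(N, T) ≥ ∑ u, max (|T(u)| - |N(u)|) 0` for every matching `T`. Hence `N` is popular, and the
right-hand side vanishes when `T` is weakly popular.
-/

section Votes

lemma sum_getD_eq_sum_map {δ R : Type*} [AddCommMonoid R] {l : List δ} {k : ℕ}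
    (hl : l.length = k) (d : δ) (f : δ → R) :
    ∑ i : Fin k, f (l.getD i d) = (l.map f).sum := by
  subst hl
  simp only [List.getD_eq_getElem, Fin.is_lt, Fin.sum_univ_fun_getElem]

variable {γ : Type*} [DecidableEq γ]

lemma vote_add_vote_swap_nonpos (r : γ → ℕ) (x y : Option γ) : vote r x y + vote r y x ≤ 0 := by
  cases x <;> cases y <;> simp only [vote] <;> grind

lemma kOf_comm (S₀ S₁ : Finset γ) : kOf S₀ S₁ = kOf S₁ S₀ := by
  rw [kOf, kOf, max_comm, Finset.inter_comm]

lemma kOf_sub_card_sdiff (S₀ S₁ : Finset γ) :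
    kOf S₀ S₁ - (S₀ \ S₁).card = S₁.card - S₀.card := by
  have := Finset.card_sdiff_add_card_inter S₀ S₁
  unfold kOf
  omega

lemma length_padded_kOf (S₀ S₁ : Finset γ) : (padded S₀ S₁ (kOf S₀ S₁)).length = kOf S₀ S₁ := by
  have := Finset.card_sdiff_add_card_inter S₀ S₁
  simp only [padded, kOf, List.length_append, List.length_map, Finset.length_toList,
    List.length_replicate]
  omega

lemma some_mem_padded {S₀ S₁ : Finset γ} {k : ℕ} {x : γ} :
    some x ∈ padded S₀ S₁ k ↔ x ∈ S₀ \ S₁ := by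
  simp [padded]

lemma none_mem_padded_kOf {S₀ S₁ : Finset γ} :
    none ∈ padded S₀ S₁ (kOf S₀ S₁) ↔ S₀.card < S₁.card := by
  simp [padded, kOf_sub_card_sdiff, Nat.sub_eq_zero_iff_le]

lemma sum_map_padded_kOf {R : Type*} [AddCommMonoid R] (S₀ S₁ : Finset γ) (f : Option γ → R) :
    ((padded S₀ S₁ (kOf S₀ S₁)).map f).sum =
      ∑ x ∈ S₀ \ S₁, f (some x) + (S₁.card - S₀.card) • f none := by
  simp [padded, Function.comp_def, kOf_sub_card_sdiff]

/-- The identity pairing of the two arrays can be read in both directions. -/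
lemma deltaSet_add_deltaSet_swap_nonpos (r : γ → ℕ) (S₀ S₁ : Finset γ) :
    deltaSet r S₀ S₁ + deltaSet r S₁ S₀ ≤ 0 := by
  have h₀ : deltaSet r S₀ S₁ ≤ _ := Finset.inf'_le _ (Finset.mem_univ 1)
  have h₁ : deltaSet r S₁ S₀ ≤ _ := Finset.inf'_le _ (Finset.mem_univ 1)
  rw [kOf_comm S₁ S₀] at h₁
  refine (add_le_add h₀ h₁).trans ?_
  rw [← Finset.sum_add_distrib]
  exact Finset.sum_nonpos fun i _ => vote_add_vote_swap_nonpos r _ _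

/-- Weak duality for the assignment problem that defines `deltaSet`. -/
lemma sum_padded_add_sum_padded_le_deltaSet {r : γ → ℕ} {S₀ S₁ : Finset γ} {f g : Option γ → ℤ}
    (hfg : ∀ x ∈ padded S₀ S₁ (kOf S₀ S₁), ∀ y ∈ padded S₁ S₀ (kOf S₁ S₀),
      f x + g y ≤ vote r x y) :
    ((padded S₀ S₁ (kOf S₀ S₁)).map f).sum + ((padded S₁ S₀ (kOf S₁ S₀)).map g).sum ≤
      deltaSet r S₀ S₁ := by
  have hl₀ := length_padded_kOf S₀ S₁
  have hl₁ := length_padded_kOf S₁ S₀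
  rw [kOf_comm S₁ S₀] at hfg hl₁ ⊢
  refine Finset.le_inf' _ _ fun σ _ => ?_
  rw [← sum_getD_eq_sum_map hl₀ none, ← sum_getD_eq_sum_map hl₁ none,
    ← Equiv.sum_comp σ fun i => g ((padded S₁ S₀ (kOf S₀ S₁)).getD i none),
    ← Finset.sum_add_distrib]
  refine Finset.sum_le_sum fun i _ => hfg _ ?_ _ ?_ <;>
  · rw [List.getD_eq_getElem _ _ (by omega)]
    exact List.getElem_mem _

end Votes

section Prices

variable {γ : Type*}

/-- A vertex with capacity `cap` and partners `S` at levels `lv` has filled its capacity with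
partners that it prefers to `t` at level `i`. Levels are compared first (`false` is the better one),
then ranks. -/
def SaturatedAt (r : γ → ℕ) (cap : ℕ) (S : Finset γ) (lv : γ → Bool) (t : γ) (i : Bool) : Prop :=
  cap ≤ S.card ∧ ∀ e ∈ S, toLex (lv e, r e) < toLex (i, r t)

/-- The price of a current partner `e` in the dual certificate, given by its level. -/
def price (lv : γ → Bool) (e : γ) : ℤ := if lv e then -1 else 1

open scoped Classical in
/-- The cost of a potential new partner `t` in the dual certificate: each of the two copies of `t`
contributes `-1` if the vertex is saturated with respect to it, and `1` otherwise. -/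
noncomputable def cost (r : γ → ℕ) (cap : ℕ) (S : Finset γ) (lv : γ → Bool) (t : γ) : ℤ :=
  ∑ i, if SaturatedAt r cap S lv t i then -1 else 1

lemma price_add_price_eq_zero {δ : Type*} {lv : γ → Bool} {lv' : δ → Bool} {e : γ} {e' : δ}
    (h : lv' e' = !lv e) : price lv e + price lv' e' = 0 := by
  cases he : lv e <;> simp [price, h, he]

lemma cost_eq_two_of_card_lt {r : γ → ℕ} {cap : ℕ} {S : Finset γ} (hS : S.card < cap)
    (lv : γ → Bool) (t : γ) : cost r cap S lv t = 2 := by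
  simp [cost, SaturatedAt, hS.not_ge]

lemma cost_add_cost_nonpos {δ : Type*} {r : γ → ℕ} {cap : ℕ} {S : Finset γ} {lv : γ → Bool} {t : γ}
    {r' : δ → ℕ} {cap' : ℕ} {S' : Finset δ} {lv' : δ → Bool} {t' : δ}
    (h : ∀ i, SaturatedAt r cap S lv t i ∨ SaturatedAt r' cap' S' lv' t' (!i)) :
    cost r cap S lv t + cost r' cap' S' lv' t' ≤ 0 := by
  classical
  unfold cost
  rw [← Equiv.sum_comp Equiv.boolNot fun i => ite (SaturatedAt r' cap' S' lv' t' i) _ _,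
    ← Finset.sum_add_distrib]
  refine Finset.sum_nonpos fun i _ => ?_
  rcases h i with h | h <;> simp only [Equiv.boolNot_apply, h, if_true] <;> split_ifs <;> norm_num

lemma neg_price_sub_cost_le_vote [DecidableEq γ] {r : γ → ℕ} {cap : ℕ} {S : Finset γ}
    {lv : γ → Bool} {e t : γ} (he : e ∈ S) (hne : e ≠ t) :
    -price lv e - cost r cap S lv t ≤ vote r (some e) (some t) := by
  have hlex : ∀ i, SaturatedAt r cap S lv t i → lv e < i ∨ lv e = i ∧ r e < r t := fun i h =>
    Prod.Lex.toLex_lt_toLex.mp (h.2 e he)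
  have hfalse := hlex false
  have htrue := hlex true
  simp only [price, cost, vote, if_neg hne, Fintype.sum_bool]
  cases hl : lv e <;> simp only [hl, Bool.lt_iff] at hfalse htrue <;> grind

/-- The surplus `|S₁| - |S₀|` counts the comparisons with null; it can be gained because an
unsaturated vertex charges the full cost `2`, which exceeds the lost vote by `1`. -/
lemma surplus_le_deltaSet [DecidableEq γ] (r : γ → ℕ) {cap : ℕ} (S₀ : Finset γ) {S₁ : Finset γ}
    (lv : γ → Bool) (hcap : S₁.card ≤ cap) :
    -(∑ e ∈ S₀ \ S₁, price lv e) - ∑ t ∈ S₁ \ S₀, cost r cap S₀ lv t +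
      ((S₁.card - S₀.card : ℕ) : ℤ) ≤ deltaSet r S₀ S₁ := by
  let f : Option γ → ℤ := fun x => x.elim 1 fun e => -price lv e
  let g : Option γ → ℤ := fun y => y.elim 0 fun t => -cost r cap S₀ lv t
  have hfg : ∀ x ∈ padded S₀ S₁ (kOf S₀ S₁), ∀ y ∈ padded S₁ S₀ (kOf S₁ S₀),
      f x + g y ≤ vote r x y := by
    rintro (_ | e) hx (_ | t) hy <;>
      simp only [none_mem_padded_kOf, some_mem_padded, Finset.mem_sdiff] at hx hy
    · omega
    · simp [f, g, vote, cost_eq_two_of_card_lt (hx.trans_le hcap)]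
    · simp only [f, g, vote, price, Option.elim]
      split_ifs <;> norm_num
    · exact neg_price_sub_cost_le_vote hx.1 (ne_of_mem_of_not_mem hx.1 hy.2)
  have h := sum_padded_add_sum_padded_le_deltaSet hfg
  simp only [sum_map_padded_kOf, f, g, Option.elim, Finset.sum_neg_distrib, smul_zero, add_zero,
    nsmul_one] at h
  linarith

end Prices

/-- Let `R` and `R'` be the rejections of the two sides of a market: each side is offered exactly
what the other side does not reject. -/
lemma exists_sdiff_eq_sdiff_of_monotone {B : Type*} [CompleteBooleanAlgebra B] {R R' : B → B}
    (hR : Monotone R) (hR' : Monotone R') (hle : ∀ y, R y ≤ y) :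
    ∃ y y', y \ R y = y' \ R' y' ∧ y ⊔ y' = ⊤ := by
  let f : B →o B := ⟨fun y => (R' (R y)ᶜ)ᶜ, fun _ _ h =>
    compl_le_compl (hR' (compl_le_compl (hR h)))⟩
  have hfix : (R' (R f.lfp)ᶜ)ᶜ = f.lfp := f.map_lfp
  refine ⟨f.lfp, (R f.lfp)ᶜ, ?_, ?_⟩
  · rw [sdiff_eq, sdiff_eq, hfix, inf_comm]
  · exact codisjoint_iff.mp (codisjoint_hnot_right.mono_left (hle _))

/-- One side of a market with set of possible contracts `X`: the contract `x` is signed by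
`agent x` on this side and by `partner x` on the other one, contracts with a smaller `key` are
preferred, and the agent `v` has room for `quota v` partners. -/
structure ContractSide (X V W L : Type*) where
  agent : X → V
  partner : X → W
  key : X → L
  quota : V → ℕ
  eq_of_key_eq : ∀ ⦃x y⦄, agent x = agent y → key x = key y → x = y

namespace ContractSide

variable {X V W L : Type*} (S : ContractSide X V W L) {C D Y : Set X} {v : V}

/-- The partners of the agent `v` in the set `C` of contracts. -/
def partners (C : Set X) (v : V) : Set W :=
  S.partner '' {x ∈ C | S.agent x = v}

lemma mem_partners {w : W} :
    w ∈ S.partners C v ↔ ∃ x ∈ C, S.agent x = v ∧ S.partner x = w := by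
  simp only [partners, Set.mem_image, Set.mem_ofPred_eq, and_assoc]

lemma ncard_partners_le_of_subset [Finite X] (h : S.partners C v ⊆ S.partners D v) :
    (S.partners C v).ncard ≤ (S.partners D v).ncard :=
  Set.ncard_le_ncard h ((Set.toFinite _).image _)

lemma partners_mono (h : C ⊆ D) : S.partners C v ⊆ S.partners D v :=
  Set.image_mono fun _ hx => ⟨h hx.1, hx.2⟩

variable [LinearOrder L]

/-- The contracts that are rejected when `Y` is offered to the agents: those for which a better
contract with the same partner is offered, or better contracts with enough partners to fill the
quota. -/
def rejected (Y : Set X) : Set X :=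
  {x ∈ Y | (∃ y ∈ Y, S.agent y = S.agent x ∧ S.partner y = S.partner x ∧ S.key y < S.key x) ∨
    S.quota (S.agent x) ≤ (S.partners {y ∈ Y | S.key y < S.key x} (S.agent x)).ncard}

/-- The greedy choice of the agents when `Y` is offered to them. -/
def chosen (Y : Set X) : Set X :=
  Y \ S.rejected Y

/-- The contracts `C` respect the quotas and include at most one contract between any two
parties. -/
def Feasible (C : Set X) : Prop :=
  Set.InjOn (fun x => (S.agent x, S.partner x)) C ∧ ∀ v, (S.partners C v).ncard ≤ S.quota v

/-- The agent of `x` has filled its quota in `C`, with contracts that it prefers to `x`. -/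
def Saturated (C : Set X) (x : X) : Prop :=
  S.quota (S.agent x) ≤ (S.partners C (S.agent x)).ncard ∧
    ∀ y ∈ C, S.agent y = S.agent x → S.key y < S.key x

/-- In the presence of `C`, the agent of `x` turns down `x`: it is saturated or has a contract with
the same partner. -/
def Declines (C : Set X) (x : X) : Prop :=
  S.partner x ∈ S.partners C (S.agent x) ∨ S.Saturated C x

lemma rejected_mono [Finite X] : Monotone S.rejected := by
  rintro Y Z hYZ x ⟨hx, h⟩
  refine ⟨hYZ hx, h.imp (fun ⟨y, hy, h⟩ => ⟨y, hYZ hy, h⟩) fun h => h.trans ?_⟩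
  exact S.ncard_partners_le_of_subset (S.partners_mono fun y hy => ⟨hYZ hy.1, hy.2⟩)

lemma injOn_chosen : Set.InjOn (fun x => (S.agent x, S.partner x)) (S.chosen Y) := by
  intro x hx y hy hxy
  obtain ⟨hagent, hpartner⟩ := Prod.mk.inj hxy
  rcases lt_trichotomy (S.key x) (S.key y) with hlt | heq | hlt
  · exact absurd ⟨hy.1, Or.inl ⟨x, hx.1, hagent, hpartner, hlt⟩⟩ hy.2
  · exact S.eq_of_key_eq hagent heq
  · exact absurd ⟨hx.1, Or.inl ⟨y, hy.1, hagent.symm, hpartner.symm, hlt⟩⟩ hx.2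

/-- Otherwise the worst chosen contract of `v` would have to compete with `quota v` other
partners. -/
lemma ncard_partners_chosen_le [Finite X] (Y : Set X) (v : V) :
    (S.partners (S.chosen Y) v).ncard ≤ S.quota v := by
  by_contra! hlt
  have hne : (S.partners (S.chosen Y) v).Nonempty := Set.nonempty_of_ncard_ne_zero (by omega)
  obtain ⟨x, ⟨hx, rfl⟩, hworst⟩ := Set.exists_max_image _ S.key (Set.toFinite _) hne.of_image
  have hbetter : S.partners (S.chosen Y) (S.agent x) \ {S.partner x} ⊆
      S.partners {y ∈ Y | S.key y < S.key x} (S.agent x) := by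
    rintro w ⟨hw, hwx⟩
    obtain ⟨y, hy, hyx, rfl⟩ := S.mem_partners.mp hw
    refine S.mem_partners.mpr ⟨y, ⟨hy.1, (hworst y ⟨hy, hyx⟩).lt_of_ne fun heq => hwx ?_⟩, hyx, rfl⟩
    rw [S.eq_of_key_eq hyx heq, Set.mem_singleton_iff]
  refine hx.2 ⟨hx.1, Or.inr ((Nat.le_sub_one_of_lt hlt).trans ?_)⟩
  exact (Set.pred_ncard_le_ncard_sdiff_singleton _ _).trans
    (Set.ncard_le_ncard hbetter ((Set.toFinite _).image _))

lemma feasible_chosen [Finite X] (Y : Set X) : S.Feasible (S.chosen Y) :=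
  ⟨S.injOn_chosen, S.ncard_partners_chosen_le Y⟩

lemma declines_chosen [Finite X] {x : X} (hx : x ∈ Y) : S.Declines (S.chosen Y) x := by
  refine or_iff_not_imp_left.mpr fun hunmatched => ?_
  obtain ⟨z, ⟨hzY, hzx, hz⟩, hbest⟩ := Set.exists_min_image
    {z ∈ Y | S.agent z = S.agent x ∧ S.partner z ∉ S.partners (S.chosen Y) (S.agent x)} S.key
    (Set.toFinite _) ⟨x, hx, rfl, hunmatched⟩
  have hmatched : ∀ y ∈ Y, S.agent y = S.agent x → S.key y < S.key z →
      S.partner y ∈ S.partners (S.chosen Y) (S.agent x) := fun y hy hyx hlt => by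
    by_contra hno
    exact hlt.not_ge (hbest y ⟨hy, hyx, hno⟩)
  have hrejected : z ∈ S.rejected Y := by
    by_contra hno
    exact hz (S.mem_partners.mpr ⟨z, ⟨hzY, hno⟩, hzx, rfl⟩)
  have hquota : S.quota (S.agent x) ≤
      (S.partners {y ∈ Y | S.key y < S.key z} (S.agent x)).ncard := by
    rcases hrejected.2 with ⟨y, hy, hyz, hpartner, hlt⟩ | hquota
    · exact absurd (hpartner ▸ hmatched y hy (hyz.trans hzx) hlt) hz
    · rwa [hzx] at hquota
  refine ⟨hquota.trans (S.ncard_partners_le_of_subset fun w hw => ?_), fun y hy hyx => ?_⟩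
  · obtain ⟨y, ⟨hy, hlt⟩, hyx, rfl⟩ := S.mem_partners.mp hw
    exact hmatched y hy hyx hlt
  · refine lt_of_lt_of_le ?_ (hbest x ⟨hx, rfl, hunmatched⟩)
    by_contra! hle
    rcases hle.eq_or_lt with heq | hlt
    · exact hz (S.mem_partners.mpr ⟨y, hy, hyx, by rw [S.eq_of_key_eq (hzx.trans hyx.symm) heq]⟩)
    · refine hy.2 ⟨hy.1, Or.inr (hyx ▸ hquota.trans ?_)⟩
      exact S.ncard_partners_le_of_subset
        (S.partners_mono fun y' hy' => ⟨hy'.1, hy'.2.trans hlt⟩)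

theorem exists_feasible_declines [Finite X] {V' W' L' : Type*} [LinearOrder L']
    (S' : ContractSide X V' W' L') :
    ∃ C, S.Feasible C ∧ S'.Feasible C ∧ ∀ x, S.Declines C x ∨ S'.Declines C x := by
  obtain ⟨Y, Y', hchosen, hcover⟩ := exists_sdiff_eq_sdiff_of_monotone S.rejected_mono
    S'.rejected_mono fun Y => Set.sep_subset Y _
  change S.chosen Y = S'.chosen Y' at hchosen
  refine ⟨S.chosen Y, S.feasible_chosen Y, hchosen ▸ S'.feasible_chosen Y', fun x => ?_⟩
  have hx : x ∈ Y ⊔ Y' := by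
    rw [hcover]
    exact Set.mem_univ x
  exact hx.imp S.declines_chosen fun hx => hchosen ▸ S'.declines_chosen hx

end ContractSide

namespace PrefInstance

variable {α β : Type*} [DecidableEq α] [DecidableEq β]

section EdgeSets

variable (N T : Finset (α × β))

lemma mem_rowSet [Fintype β] {N : Finset (α × β)} {a : α} {b : β} :
    b ∈ rowSet N a ↔ (a, b) ∈ N := by
  simp only [rowSet, Finset.mem_filter_univ]

lemma mem_colSet [Fintype α] {N : Finset (α × β)} {a : α} {b : β} :
    a ∈ colSet N b ↔ (a, b) ∈ N := by
  simp only [colSet, Finset.mem_filter_univ]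

lemma sum_rowSet_sdiff [Fintype α] [Fintype β] {R : Type*} [AddCommMonoid R] (f : α → β → R) :
    ∑ a, ∑ b ∈ rowSet N a \ rowSet T a, f a b = ∑ e ∈ N \ T, f e.1 e.2 :=
  (Finset.sum_finset_product' _ _ _ (by simp [mem_rowSet])).symm

lemma sum_colSet_sdiff [Fintype α] [Fintype β] {R : Type*} [AddCommMonoid R] (f : α → β → R) :
    ∑ b, ∑ a ∈ colSet N b \ colSet T b, f a b = ∑ e ∈ N \ T, f e.1 e.2 :=
  (Finset.sum_finset_product_right' _ _ _ (by simp [mem_colSet])).symm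

lemma sum_card_rowSet [Fintype α] [Fintype β] : ∑ a, (rowSet N a).card = N.card := by
  simp only [Finset.card_eq_sum_ones]
  exact (Finset.sum_finset_product' _ _ _ (by simp [mem_rowSet])).symm

lemma sum_card_colSet [Fintype α] [Fintype β] : ∑ b, (colSet N b).card = N.card := by
  simp only [Finset.card_eq_sum_ones]
  exact (Finset.sum_finset_product_right' _ _ _ (by simp [mem_colSet])).symm

variable {N T}

lemma card_rowSet_eq_of_le [Finite α] [Fintype β]
    (h : ∀ a, (rowSet T a).card ≤ (rowSet N a).card) (hcard : N.card ≤ T.card) (a : α) :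
    (rowSet T a).card = (rowSet N a).card := by
  have := Fintype.ofFinite α
  rw [← sum_card_rowSet, ← sum_card_rowSet] at hcard
  exact (Finset.sum_eq_sum_iff_of_le fun a _ => h a).mp
    ((Finset.sum_le_sum fun a _ => h a).antisymm hcard) a (Finset.mem_univ a)

lemma card_colSet_eq_of_le [Fintype α] [Finite β]
    (h : ∀ b, (colSet T b).card ≤ (colSet N b).card) (hcard : N.card ≤ T.card) (b : β) :
    (colSet T b).card = (colSet N b).card := by
  have := Fintype.ofFinite β
  rw [← sum_card_colSet, ← sum_card_colSet] at hcard
  exact (Finset.sum_eq_sum_iff_of_le fun b _ => h b).mp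
    ((Finset.sum_le_sum fun b _ => h b).antisymm hcard) b (Finset.mem_univ b)

end EdgeSets

variable [Fintype α] [Fintype β] (I : PrefInstance α β)

lemma Delta_add_Delta_swap_nonpos (M T : Finset (α × β)) : I.Delta M T + I.Delta T M ≤ 0 := by
  have hA : ∑ a, (I.DeltaA M T a + I.DeltaA T M a) ≤ 0 :=
    Finset.sum_nonpos fun a _ => deltaSet_add_deltaSet_swap_nonpos _ _ _
  have hB : ∑ b, (I.DeltaB M T b + I.DeltaB T M b) ≤ 0 :=
    Finset.sum_nonpos fun b _ => deltaSet_add_deltaSet_swap_nonpos _ _ _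
  rw [Finset.sum_add_distrib] at hA hB
  unfold Delta
  linarith

variable {I} in
lemma Popular.weaklyPopular {M : Finset (α × β)} (hM : I.Popular M) : I.WeaklyPopular M :=
  ⟨hM.1, fun T hT => by linarith [hM.2 T hT, I.Delta_add_Delta_swap_nonpos M T]⟩

/-- `N` is a stable matching of the two-level instance, in which `lv` gives the level of each edge
of `N`: vertices of `A` prefer level `false`, vertices of `B` prefer level `true` (hence the
negated levels on their side), and neither copy of an edge outside `N` blocks. -/
structure LevelStable (N : Finset (α × β)) (lv : α → β → Bool) : Prop where
  isMatching : I.IsMatching N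
  saturated : ∀ ⦃a b⦄, (a, b) ∈ I.E → (a, b) ∉ N → ∀ i,
    SaturatedAt (I.rankA a) (I.capA a) (rowSet N a) (lv a) b i ∨
      SaturatedAt (I.rankB b) (I.capB b) (colSet N b) (fun a' => !lv a' b) a (!i)

section Existence

/-- The edges of the two-level instance: two copies of every edge of `G`, one per level. -/
abbrev LevelledEdge : Type _ := I.E × Bool

/-- The preferences of `A` over the edges of the two-level instance. -/
def sideA : ContractSide I.LevelledEdge α β (Bool ×ₗ ℕ) where
  agent x := x.1.1.1
  partner x := x.1.1.2
  key x := toLex (x.2, I.rankA x.1.1.1 x.1.1.2)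
  quota := I.capA
  eq_of_key_eq := by
    rintro ⟨⟨⟨a, b⟩, hb⟩, i⟩ ⟨⟨⟨a', b'⟩, hb'⟩, j⟩ (rfl : a = a') hkey
    obtain ⟨rfl, hrank⟩ := Prod.mk.inj (toLex.injective hkey)
    obtain rfl : b = b' := I.rankA_injOn a hb hb' hrank
    rfl

/-- The preferences of `B` over the edges of the two-level instance. -/
def sideB : ContractSide I.LevelledEdge β α (Bool ×ₗ ℕ) where
  agent x := x.1.1.2
  partner x := x.1.1.1
  key x := toLex (!x.2, I.rankB x.1.1.2 x.1.1.1)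
  quota := I.capB
  eq_of_key_eq := by
    rintro ⟨⟨⟨a, b⟩, ha⟩, i⟩ ⟨⟨⟨a', b'⟩, ha'⟩, j⟩ (rfl : b = b') hkey
    obtain ⟨hlevel, hrank⟩ := Prod.mk.inj (toLex.injective hkey)
    obtain rfl : i = j := Bool.not_inj hlevel
    obtain rfl : a = a' := I.rankB_injOn b ha ha' hrank
    rfl

variable {I}
variable {C : Set I.LevelledEdge}

/-- The edges of `G` that have a copy in `C`. -/
noncomputable def baseEdges (C : Set I.LevelledEdge) : Finset (α × β) :=
  (Set.toFinite ((fun x => x.1.1) '' C)).toFinset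

open scoped Classical in
/-- The level at which the edge `(a, b)` occurs in `C`, with value `false` where it does not
occur. -/
noncomputable def levelIn (C : Set I.LevelledEdge) (a : α) (b : β) : Bool :=
  decide (∃ h : (a, b) ∈ I.E, (⟨(a, b), h⟩, true) ∈ C)

lemma mem_baseEdges {e : α × β} : e ∈ baseEdges C ↔ ∃ x ∈ C, x.1.1 = e := by
  simp only [baseEdges, Set.Finite.mem_toFinset, Set.mem_image]

lemma baseEdges_subset : baseEdges C ⊆ I.E := fun _ he => by
  obtain ⟨x, -, rfl⟩ := mem_baseEdges.mp he
  exact x.1.2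

lemma coe_rowSet_baseEdges (a : α) : (rowSet (baseEdges C) a : Set β) = I.sideA.partners C a := by
  ext b
  simp [mem_rowSet, mem_baseEdges, ContractSide.mem_partners, sideA, Prod.ext_iff]

lemma coe_colSet_baseEdges (b : β) : (colSet (baseEdges C) b : Set α) = I.sideB.partners C b := by
  ext a
  simp [mem_colSet, mem_baseEdges, ContractSide.mem_partners, sideB, Prod.ext_iff, and_comm]

lemma levelIn_eq (hC : I.sideA.Feasible C) {x : I.LevelledEdge} (hx : x ∈ C) :
    levelIn C x.1.1.1 x.1.1.2 = x.2 := by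
  classical
  obtain ⟨⟨e, he⟩, _ | _⟩ := x
  · refine decide_eq_false fun ⟨_, htrue⟩ => ?_
    exact Bool.false_ne_true (congrArg Prod.snd (hC.1 hx htrue rfl))
  · exact decide_eq_true ⟨he, hx⟩

lemma isMatching_baseEdges (hA : I.sideA.Feasible C) (hB : I.sideB.Feasible C) :
    I.IsMatching (baseEdges C) := by
  refine ⟨baseEdges_subset, fun a => ?_, fun b => ?_⟩
  · rw [← Set.ncard_coe_finset, coe_rowSet_baseEdges]
    exact hA.2 a
  · rw [← Set.ncard_coe_finset, coe_colSet_baseEdges]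
    exact hB.2 b

lemma saturatedAt_of_sideA_saturated (hC : I.sideA.Feasible C) {x : I.LevelledEdge}
    (hx : I.sideA.Saturated C x) :
    SaturatedAt (I.rankA x.1.1.1) (I.capA x.1.1.1) (rowSet (baseEdges C) x.1.1.1)
      (levelIn C x.1.1.1) x.1.1.2 x.2 := by
  refine ⟨?_, fun b hb => ?_⟩
  · rw [← Set.ncard_coe_finset, coe_rowSet_baseEdges]
    exact hx.1
  · obtain ⟨y, hy, hyb⟩ := mem_baseEdges.mp (mem_rowSet.mp hb)
    have hlt := hx.2 y hy (congrArg Prod.fst hyb :)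
    simpa only [sideA, ← levelIn_eq hC hy, hyb] using hlt

lemma saturatedAt_of_sideB_saturated (hC : I.sideA.Feasible C) {x : I.LevelledEdge}
    (hx : I.sideB.Saturated C x) :
    SaturatedAt (I.rankB x.1.1.2) (I.capB x.1.1.2) (colSet (baseEdges C) x.1.1.2)
      (fun a => !levelIn C a x.1.1.2) x.1.1.1 (!x.2) := by
  refine ⟨?_, fun a ha => ?_⟩
  · rw [← Set.ncard_coe_finset, coe_colSet_baseEdges]
    exact hx.1
  · obtain ⟨y, hy, hya⟩ := mem_baseEdges.mp (mem_colSet.mp ha)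
    have hlt := hx.2 y hy (congrArg Prod.snd hya :)
    simpa only [sideB, ← levelIn_eq hC hy, hya] using hlt

variable (I) in
theorem exists_levelStable : ∃ N lv, I.LevelStable N lv := by
  obtain ⟨C, hA, hB, hdeclines⟩ := I.sideA.exists_feasible_declines I.sideB
  refine ⟨baseEdges C, levelIn C, isMatching_baseEdges hA hB, fun a b he hno i => ?_⟩
  rcases hdeclines (⟨(a, b), he⟩, i) with (hmem | hsat) | (hmem | hsat)
  · rw [← coe_rowSet_baseEdges] at hmem
    exact absurd (mem_rowSet.mp hmem) hno
  · exact Or.inl (saturatedAt_of_sideA_saturated hA hsat)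
  · rw [← coe_colSet_baseEdges] at hmem
    exact absurd (mem_colSet.mp hmem) hno
  · exact Or.inr (saturatedAt_of_sideB_saturated hA hsat)

end Existence

namespace LevelStable

variable {I} {N T : Finset (α × β)} {lv : α → β → Bool}

lemma sum_cost_nonpos (hN : I.LevelStable N lv) (hT : T ⊆ I.E) :
    ∑ e ∈ T \ N, cost (I.rankA e.1) (I.capA e.1) (rowSet N e.1) (lv e.1) e.2 +
      ∑ e ∈ T \ N, cost (I.rankB e.2) (I.capB e.2) (colSet N e.2) (fun a => !lv a e.2) e.1 ≤ 0 := by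
  rw [← Finset.sum_add_distrib]
  refine Finset.sum_nonpos fun e he => cost_add_cost_nonpos ?_
  obtain ⟨heT, heN⟩ := Finset.mem_sdiff.mp he
  exact hN.saturated (hT heT) heN

theorem surplus_le_Delta (hN : I.LevelStable N lv) (hT : I.IsMatching T) :
    ∑ a, (((rowSet T a).card - (rowSet N a).card : ℕ) : ℤ) +
      ∑ b, (((colSet T b).card - (colSet N b).card : ℕ) : ℤ) ≤ I.Delta N T := by
  have hA := Finset.sum_le_sum fun a (_ : a ∈ Finset.univ) =>
    surplus_le_deltaSet (I.rankA a) (rowSet N a) (lv a) (hT.2.1 a)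
  have hB := Finset.sum_le_sum fun b (_ : b ∈ Finset.univ) =>
    surplus_le_deltaSet (I.rankB b) (colSet N b) (fun a => !lv a b) (hT.2.2 b)
  simp only [Finset.sum_add_distrib, Finset.sum_sub_distrib, Finset.sum_neg_distrib] at hA hB
  rw [sum_rowSet_sdiff N T fun a b => price (lv a) b,
    sum_rowSet_sdiff T N fun a b => cost (I.rankA a) (I.capA a) (rowSet N a) (lv a) b] at hA
  rw [sum_colSet_sdiff N T fun a b => price (fun a => !lv a b) a, sum_colSet_sdiff T N fun a b =>
    cost (I.rankB b) (I.capB b) (colSet N b) (fun a => !lv a b) a] at hB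
  have hprice : ∑ e ∈ N \ T, price (lv e.1) e.2 +
      ∑ e ∈ N \ T, price (fun a => !lv a e.2) e.1 = 0 := by
    rw [← Finset.sum_add_distrib]
    exact Finset.sum_eq_zero fun e _ => price_add_price_eq_zero rfl
  have hcost := hN.sum_cost_nonpos hT.1
  unfold Delta DeltaA DeltaB
  linarith

lemma popular (hN : I.LevelStable N lv) : I.Popular N :=
  ⟨hN.isMatching, fun _ hT => le_trans (by positivity) (hN.surplus_le_Delta hT)⟩

lemma card_le_of_weaklyPopular (hN : I.LevelStable N lv) (hT : I.WeaklyPopular T) :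
    (∀ a, (rowSet T a).card ≤ (rowSet N a).card) ∧
      ∀ b, (colSet T b).card ≤ (colSet N b).card := by
  have hsurplus : ∑ a, ((rowSet T a).card - (rowSet N a).card) +
      ∑ b, ((colSet T b).card - (colSet N b).card) = 0 := by
    rw [← Nat.le_zero]
    exact_mod_cast (hN.surplus_le_Delta hT.1).trans (hT.2 N hN.isMatching)
  simpa only [Nat.add_eq_zero_iff, Finset.sum_eq_zero_iff, Finset.mem_univ, true_imp_iff,
    Nat.sub_eq_zero_iff_le] using hsurplus

end LevelStable

theorem exists_popular_forall_weaklyPopular_card_le :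
    ∃ N, I.Popular N ∧ ∀ T, I.WeaklyPopular T →
      (∀ a, (rowSet T a).card ≤ (rowSet N a).card) ∧
        ∀ b, (colSet T b).card ≤ (colSet N b).card := by
  obtain ⟨N, lv, hN⟩ := I.exists_levelStable
  exact ⟨N, hN.popular, fun T => hN.card_le_of_weaklyPopular⟩

end PrefInstance

theorem statement12_general {α β : Type*} [Fintype α] [Fintype β] [DecidableEq α] [DecidableEq β]
    (I : PrefInstance α β) (M T : Finset (α × β))
    (hM : I.WeaklyPopular M) (hT : I.WeaklyPopular T)
    (hMmax : ∀ P : Finset (α × β), I.Popular P → P.card ≤ M.card)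
    (hTmax : ∀ P : Finset (α × β), I.Popular P → P.card ≤ T.card) :
    (∀ a : α, (PrefInstance.rowSet M a).card = (PrefInstance.rowSet T a).card) ∧
    (∀ b : β, (PrefInstance.colSet M b).card = (PrefInstance.colSet T b).card) := by
  obtain ⟨N, hN, hle⟩ := I.exists_popular_forall_weaklyPopular_card_le
  obtain ⟨hMA, hMB⟩ := hle M hM
  obtain ⟨hTA, hTB⟩ := hle T hT
  have hNM := hMmax N hN
  have hNT := hTmax N hN
  exact ⟨fun a => (PrefInstance.card_rowSet_eq_of_le hMA hNM a).trans
      (PrefInstance.card_rowSet_eq_of_le hTA hNT a).symm,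
    fun b => (PrefInstance.card_colSet_eq_of_le hMB hNM b).trans
      (PrefInstance.card_colSet_eq_of_le hTB hNT b).symm⟩

/-- Let `M` and `T` be popular matchings of `G`, each of maximum size
among all popular matchings of `G`. Then `|M(u)| = |T(u)|` for every vertex `u ∈ A ∪ B`;
in particular all maximum-size popular matchings match the same set of vertices. -/
theorem statement12 {α β : Type*} [Fintype α] [Fintype β] [DecidableEq α] [DecidableEq β]
    (I : PrefInstance α β) (M T : Finset (α × β))
    (hM : I.Popular M) (hT : I.Popular T)
    (hMmax : ∀ P : Finset (α × β), I.Popular P → P.card ≤ M.card)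
    (hTmax : ∀ P : Finset (α × β), I.Popular P → P.card ≤ T.card) :
    (∀ a : α, (PrefInstance.rowSet M a).card = (PrefInstance.rowSet T a).card) ∧
    (∀ b : β, (PrefInstance.colSet M b).card = (PrefInstance.colSet T b).card) := by
  exact statement12_general I M T hM.weaklyPopular hT.weaklyPopular hMmax hTmax
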